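/- Let V be a simple weight module with finite-dimensional weight spaces over the N=2 Ramond algebra 𝔤. If V is neither a highest weight module nor a lowest weight module, then V is cuspidal. -/

import Mathlib

open Submodule

/-- A module over the `N = 2` Ramond algebra `𝔤`: a `ℤ/2`-graded complex vector
space `V = even ⊕ odd` with parity-preserving operators `L m`, `H m`,
parity-reversing operators `Gp m` (`G_m^+`), `Gm m` (`G_m^-`), and a scalar `c₀`
(the action of the central element `C`), subject to the defining relations. -/
structure RamondRep (V : Type) [AddCommGroup V] [Module ℂ V] : Type where
  L : ℤ → V →ₗ[ℂ] V
  H : ℤ → V →ₗ[ℂ] V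
  Gp : ℤ → V →ₗ[ℂ] V
  Gm : ℤ → V →ₗ[ℂ] V
  c₀ : ℂ
  even : Submodule ℂ V
  odd : Submodule ℂ V
  grading : IsCompl even odd
  L_even : ∀ (m : ℤ), ∀ v ∈ even, L m v ∈ even
  L_odd : ∀ (m : ℤ), ∀ v ∈ odd, L m v ∈ odd
  H_even : ∀ (m : ℤ), ∀ v ∈ even, H m v ∈ even
  H_odd : ∀ (m : ℤ), ∀ v ∈ odd, H m v ∈ odd
  Gp_even : ∀ (m : ℤ), ∀ v ∈ even, Gp m v ∈ odd
  Gp_odd : ∀ (m : ℤ), ∀ v ∈ odd, Gp m v ∈ even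
  Gm_even : ∀ (m : ℤ), ∀ v ∈ even, Gm m v ∈ odd
  Gm_odd : ∀ (m : ℤ), ∀ v ∈ odd, Gm m v ∈ even
  rel_LL : ∀ (m n : ℤ) (v : V),
    L m (L n v) - L n (L m v) =
      ((n : ℂ) - (m : ℂ)) • L (m + n) v +
        ((1 / 12 : ℂ) * ((n : ℂ) ^ 3 - (n : ℂ)) *
          (if m + n = 0 then (1 : ℂ) else 0) * c₀) • v
  rel_HH : ∀ (m n : ℤ) (v : V),
    H m (H n v) - H n (H m v) =
      ((1 / 3 : ℂ) * (m : ℂ) * (if m + n = 0 then (1 : ℂ) else 0) * c₀) • v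
  rel_LH : ∀ (m n : ℤ) (v : V),
    L m (H n v) - H n (L m v) = (n : ℂ) • H (m + n) v
  rel_LGp : ∀ (m p : ℤ) (v : V),
    L m (Gp p v) - Gp p (L m v) = ((p : ℂ) - (m : ℂ) / 2) • Gp (p + m) v
  rel_LGm : ∀ (m p : ℤ) (v : V),
    L m (Gm p v) - Gm p (L m v) = ((p : ℂ) - (m : ℂ) / 2) • Gm (p + m) v
  rel_HGp : ∀ (m p : ℤ) (v : V),
    H m (Gp p v) - Gp p (H m v) = Gp (m + p) v
  rel_HGm : ∀ (m p : ℤ) (v : V),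
    H m (Gm p v) - Gm p (H m v) = -(Gm (m + p) v)
  rel_GpGm : ∀ (p q : ℤ) (v : V),
    Gp p (Gm q v) + Gm q (Gp p v) =
      (-2 : ℂ) • L (p + q) v + ((p : ℂ) - (q : ℂ)) • H (p + q) v +
        ((1 / 3 : ℂ) * ((p : ℂ) ^ 2 - 1 / 4) *
          (if p + q = 0 then (1 : ℂ) else 0) * c₀) • v
  rel_GpGp : ∀ (p q : ℤ) (v : V), Gp p (Gp q v) + Gp q (Gp p v) = 0
  rel_GmGm : ∀ (p q : ℤ) (v : V), Gm p (Gm q v) + Gm q (Gm p v) = 0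

namespace RamondRep

variable {V : Type} [AddCommGroup V] [Module ℂ V]

/-- The weight space `V_μ = {v ∈ V : L₀ v = μ v}`. -/
def wt (ρ : RamondRep V) (μ : ℂ) : Submodule ℂ V :=
  Module.End.eigenspace (ρ.L 0) μ

/-- The parity components, indexed by `ZMod 2`. -/
def parity (ρ : RamondRep V) (τ : ZMod 2) : Submodule ℂ V :=
  if τ = 0 then ρ.even else ρ.odd

/-- `V` is a weight module: it is the sum of its weight spaces. -/
def IsWeight (ρ : RamondRep V) : Prop := (⨆ μ : ℂ, ρ.wt μ) = ⊤

/-- `V` is cuspidal: a weight module with uniformly bounded weight multiplicities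
in each parity. -/
def Cuspidal (ρ : RamondRep V) : Prop :=
  ρ.IsWeight ∧ ∃ p : ℕ, ∀ (μ : ℂ) (τ : ZMod 2),
    Module.rank ℂ ↥(ρ.wt μ ⊓ ρ.parity τ) ≤ (p : Cardinal)

/-- A subspace invariant under all the operators. -/
def IsSubmod (ρ : RamondRep V) (W : Submodule ℂ V) : Prop :=
  (∀ (m : ℤ), ∀ v ∈ W, ρ.L m v ∈ W) ∧ (∀ (m : ℤ), ∀ v ∈ W, ρ.H m v ∈ W) ∧
    (∀ (m : ℤ), ∀ v ∈ W, ρ.Gp m v ∈ W) ∧ (∀ (m : ℤ), ∀ v ∈ W, ρ.Gm m v ∈ W)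

/-- A graded subspace invariant under all the operators. -/
def IsGradedSubmod (ρ : RamondRep V) (W : Submodule ℂ V) : Prop :=
  ρ.IsSubmod W ∧ W = (W ⊓ ρ.even) ⊔ (W ⊓ ρ.odd)

/-- The trivial representation: all operators act by zero. -/
def IsTrivialRep (ρ : RamondRep V) : Prop :=
  ∀ (m : ℤ) (v : V), ρ.L m v = 0 ∧ ρ.H m v = 0 ∧ ρ.Gp m v = 0 ∧ ρ.Gm m v = 0

/-- `V` is simple: nontrivial, and its only graded submodules are `⊥` and `⊤`. -/
def IsSimple (ρ : RamondRep V) : Prop :=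
  ¬ ρ.IsTrivialRep ∧
    ∀ W : Submodule ℂ V, ρ.IsGradedSubmod W → W = ⊥ ∨ W = ⊤

/-- `V` is generated by `v` as a `𝔤`-module. -/
def GeneratedBy (ρ : RamondRep V) (v : V) : Prop :=
  ∀ W : Submodule ℂ V, ρ.IsSubmod W → v ∈ W → W = ⊤

/-- `V` is a highest weight module. -/
def IsHighestWeight (ρ : RamondRep V) : Prop :=
  ∃ v : V, v ≠ 0 ∧ ρ.GeneratedBy v ∧
    (∃ h h' : ℂ, ρ.L 0 v = h • v ∧ ρ.H 0 v = h' • v) ∧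
    (∀ m : ℤ, 0 < m → ρ.L m v = 0 ∧ ρ.H m v = 0 ∧ ρ.Gp m v = 0 ∧ ρ.Gm m v = 0) ∧
    ρ.Gp 0 v = 0

/-- `V` is a lowest weight module. -/
def IsLowestWeight (ρ : RamondRep V) : Prop :=
  ∃ v : V, v ≠ 0 ∧ ρ.GeneratedBy v ∧
    (∃ h h' : ℂ, ρ.L 0 v = h • v ∧ ρ.H 0 v = h' • v) ∧
    (∀ m : ℤ, m < 0 → ρ.L m v = 0 ∧ ρ.H m v = 0 ∧ ρ.Gp m v = 0 ∧ ρ.Gm m v = 0) ∧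
    ρ.Gm 0 v = 0

end RamondRep

/-!
If `V` is not a highest weight module, then no nonzero vector `v` is annihilated by the operators
of two coprime positive degrees `p < q`. Otherwise brackets with `L` would make all operators of
large degree annihilate `v`; the vectors with this property form a graded submodule, which is then
all of `V`, and climbing up from a nonzero finite-dimensional weight space one meets a highest
weight vector. Hence the operators of degrees `k` and `k + 1` jointly embed `V_{μ-k}` into four
copies of `V_μ ⊕ V_{μ+1}`, which bounds the dimensions of all weight spaces below `V_μ`. The
weight spaces above `V_μ` are handled by an automorphism of the algebra that reverses degrees.
-/

theorem exists_ne_zero_mem_apply_eq_smul {K V : Type*} [Field K] [IsAlgClosed K] [AddCommGroup V]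
    [Module K V] (f : V →ₗ[K] V) (S : Submodule K V) [FiniteDimensional K S] (hS : S ≠ ⊥)
    (hf : ∀ v ∈ S, f v ∈ S) : ∃ v ∈ S, v ≠ 0 ∧ ∃ c : K, f v = c • v := by
  have : Nontrivial S := Submodule.nontrivial_iff_ne_bot.2 hS
  obtain ⟨c, hc⟩ := Module.End.exists_eigenvalue (f.restrict hf)
  obtain ⟨v, hv⟩ := hc.exists_hasEigenvector
  exact ⟨v, v.2, fun h => hv.2 (Subtype.ext h), c, congrArg Subtype.val hv.apply_eq_smul⟩

theorem exists_forall_ge_mem_of_forall_add_mem {D : Set ℕ} {p q : ℕ} (hp : 0 < p) (hpq : p < q)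
    (hcop : p.Coprime q) (hpD : p ∈ D) (hqD : q ∈ D)
    (hadd : ∀ m ∈ D, ∀ n ∈ D, 0 < m → m < n → m + n ∈ D) : ∃ N, ∀ n ≥ N, n ∈ D := by
  have combination_mem (a b : ℕ) : p + q + a * p + b * q ∈ D := by
    induction b with
    | zero =>
      induction a with
      | zero => simpa using hadd p hpD q hqD hp hpq
      | succ a ih =>
        convert hadd p hpD _ ih hp (by nlinarith) using 1
        ring
    | succ b ih =>
      convert hadd q hqD _ ih (by omega) (by nlinarith) using 1
      ring
  refine ⟨p + q + p.pred * q.pred, fun n hn => ?_⟩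
  obtain ⟨a, b, hab⟩ := Nat.exists_add_mul_eq_of_gcd_dvd_of_mul_pred_le p q (n - (p + q))
    (by simp [hcop.gcd_eq_one]) (by omega)
  convert combination_mem a b using 1
  omega

theorem zmodTwo_eq_zero_or_eq_one : ∀ τ : ZMod 2, τ = 0 ∨ τ = 1 := by
  decide

namespace RamondRep

variable {V : Type} [AddCommGroup V] [Module ℂ V] (ρ : RamondRep V)

/-- The four families of noncentral generators of the `N = 2` Ramond algebra; indexing the
operators by them lets statements about all families be made, and often proved, uniformly. -/
inductive Generator
  | L | H | Gp | Gm

namespace Generator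

instance : Fintype Generator :=
  ⟨⟨{L, H, Gp, Gm}, by simp⟩, by rintro (_ | _) <;> simp⟩

/-- The degree in `ℤ/2` of the operators of a family. -/
def parity : Generator → ZMod 2
  | L | H => 0
  | Gp | Gm => 1

/-- The involution exchanging the families `G⁺` and `G⁻`. -/
def swap : Generator → Generator
  | L => L
  | H => H
  | Gp => Gm
  | Gm => Gp

theorem swap_involutive : Function.Involutive swap := by
  rintro (_ | _) <;> rfl

theorem forall_iff {p : Generator → Prop} : (∀ x, p x) ↔ p L ∧ p H ∧ p Gp ∧ p Gm :=
  ⟨fun h => ⟨h L, h H, h Gp, h Gm⟩, fun ⟨hL, hH, hGp, hGm⟩ x => by cases x <;> assumption⟩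

end Generator

/-- The operator of degree `m` in the family `x`. -/
@[simp]
def op : Generator → ℤ → V →ₗ[ℂ] V
  | .L => ρ.L
  | .H => ρ.H
  | .Gp => ρ.Gp
  | .Gm => ρ.Gm

variable {ρ} {W : Submodule ℂ V} {v : V} {μ : ℂ} {m n N : ℤ} {τ : ZMod 2}

theorem isSubmod_iff : ρ.IsSubmod W ↔ ∀ x m, ∀ v ∈ W, ρ.op x m v ∈ W :=
  (Generator.forall_iff (p := fun x => ∀ m, ∀ v ∈ W, ρ.op x m v ∈ W)).symm

theorem isTrivialRep_iff : ρ.IsTrivialRep ↔ ∀ x m v, ρ.op x m v = 0 := by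
  simp only [IsTrivialRep, Generator.forall_iff, op, forall_and]

theorem op_mem_parity (x : Generator) (m : ℤ) (hv : v ∈ ρ.parity τ) :
    ρ.op x m v ∈ ρ.parity (τ + x.parity) := by
  rcases zmodTwo_eq_zero_or_eq_one τ with rfl | rfl
  · cases x
    exacts [ρ.L_even m v hv, ρ.H_even m v hv, ρ.Gp_even m v hv, ρ.Gm_even m v hv]
  · cases x
    exacts [ρ.L_odd m v hv, ρ.H_odd m v hv, ρ.Gp_odd m v hv, ρ.Gm_odd m v hv]

theorem disjoint_parity_add_one (τ : ZMod 2) : Disjoint (ρ.parity τ) (ρ.parity (τ + 1)) := by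
  rcases zmodTwo_eq_zero_or_eq_one τ with rfl | rfl
  exacts [ρ.grading.disjoint, ρ.grading.disjoint.symm]

theorem exists_even_add_odd (ρ : RamondRep V) (v : V) : ∃ e ∈ ρ.even, ∃ o ∈ ρ.odd, e + o = v :=
  Submodule.mem_sup.1 (ρ.grading.sup_eq_top ▸ Submodule.mem_top)

variable (ρ) in
/-- A graded subspace, not necessarily invariant under the operators. -/
def IsGraded (W : Submodule ℂ V) : Prop := W = (W ⊓ ρ.even) ⊔ (W ⊓ ρ.odd)

theorem isGraded_iff :
    ρ.IsGraded W ↔ ∀ e ∈ ρ.even, ∀ o ∈ ρ.odd, e + o ∈ W → e ∈ W ∧ o ∈ W := by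
  refine ⟨fun h e he o ho heo => ?_, fun h => le_antisymm (fun v hv => ?_)
    (sup_le inf_le_left inf_le_left)⟩
  · rw [h] at heo
    obtain ⟨e', ⟨heW, he'⟩, o', ⟨hoW, ho'⟩, heq⟩ := Submodule.mem_sup.1 heo
    have hsub : e' - e = o - o' := by
      linear_combination (norm := module) heq
    have hzero : e' - e = 0 := Submodule.disjoint_def.1 ρ.grading.disjoint _ (sub_mem he' he)
      (hsub ▸ sub_mem ho ho')
    obtain rfl : e' = e := sub_eq_zero.1 hzero
    exact ⟨heW, add_left_cancel heq ▸ hoW⟩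
  · obtain ⟨e, he, o, ho, rfl⟩ := ρ.exists_even_add_odd v
    obtain ⟨heW, hoW⟩ := h e he o ho hv
    exact Submodule.add_mem_sup ⟨heW, he⟩ ⟨hoW, ho⟩

theorem isGraded_ker {f : V →ₗ[ℂ] V} (δ : ZMod 2)
    (hf : ∀ τ, ∀ v ∈ ρ.parity τ, f v ∈ ρ.parity (τ + δ)) : ρ.IsGraded (LinearMap.ker f) := by
  refine isGraded_iff.2 fun e he o ho heo => ?_
  have hadd : f e + f o = 0 := by rw [← map_add]; exact heo
  have hfe : f e ∈ ρ.parity δ := by simpa using hf 0 e he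
  have hfo : f o ∈ ρ.parity (δ + 1) := by simpa [add_comm] using hf 1 o ho
  have hfe0 : f e = 0 := Submodule.disjoint_def.1 (disjoint_parity_add_one δ) _ hfe
    (eq_neg_of_add_eq_zero_left hadd ▸ neg_mem hfo)
  exact ⟨hfe0, by simpa [hfe0] using hadd⟩

theorem isGraded_iInf {ι : Sort*} {W : ι → Submodule ℂ V} (h : ∀ i, ρ.IsGraded (W i)) :
    ρ.IsGraded (⨅ i, W i) := by
  simp only [isGraded_iff, Submodule.mem_iInf] at h ⊢
  exact fun e he o ho heo =>
    ⟨fun i => (h i e he o ho (heo i)).1, fun i => (h i e he o ho (heo i)).2⟩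

theorem IsGraded.inf {W₁ W₂ : Submodule ℂ V} (h₁ : ρ.IsGraded W₁) (h₂ : ρ.IsGraded W₂) :
    ρ.IsGraded (W₁ ⊓ W₂) := by
  rw [inf_eq_iInf]
  exact isGraded_iInf (Bool.rec h₂ h₁)

theorem isGraded_iSup {ι : Sort*} {W : ι → Submodule ℂ V} (h : ∀ i, ρ.IsGraded (W i)) :
    ρ.IsGraded (⨆ i, W i) :=
  le_antisymm
    (iSup_le fun i => (h i).le.trans (sup_le_sup (inf_le_inf_right _ (le_iSup W i))
      (inf_le_inf_right _ (le_iSup W i))))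
    (sup_le inf_le_left inf_le_left)

theorem IsGraded.exists_inf_parity_ne_bot (h : ρ.IsGraded W) (hW : W ≠ ⊥) :
    ∃ τ, W ⊓ ρ.parity τ ≠ ⊥ := by
  by_contra! hbot
  have heven : W ⊓ ρ.even = ⊥ := hbot 0
  have hodd : W ⊓ ρ.odd = ⊥ := hbot 1
  exact hW (by rw [h, heven, hodd, sup_bot_eq])

theorem inf_parity_le_inf_even_sup_inf_odd (W : Submodule ℂ V) (τ : ZMod 2) :
    W ⊓ ρ.parity τ ≤ (W ⊓ ρ.even) ⊔ (W ⊓ ρ.odd) := by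
  rcases zmodTwo_eq_zero_or_eq_one τ with rfl | rfl
  exacts [le_sup_left, le_sup_right]

theorem IsSubmod.inf_even_sup_inf_odd (hW : ρ.IsSubmod W) :
    ρ.IsGradedSubmod ((W ⊓ ρ.even) ⊔ (W ⊓ ρ.odd)) := by
  have op_mem (x m τ) (v) (hv : v ∈ W ⊓ ρ.parity τ) :
      ρ.op x m v ∈ (W ⊓ ρ.even) ⊔ (W ⊓ ρ.odd) :=
    inf_parity_le_inf_even_sup_inf_odd W _
      ⟨isSubmod_iff.1 hW x m v hv.1, op_mem_parity x m hv.2⟩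
  refine ⟨isSubmod_iff.2 fun x m v hv => ?_, le_antisymm ?_ (sup_le inf_le_left inf_le_left)⟩
  · obtain ⟨e, he, o, ho, rfl⟩ := Submodule.mem_sup.1 hv
    rw [map_add]
    exact add_mem (op_mem x m 0 e he) (op_mem x m 1 o ho)
  · exact sup_le_sup (le_inf le_sup_left inf_le_right) (le_inf le_sup_right inf_le_right)

theorem IsSimple.generatedBy_of_mem_parity (hρ : ρ.IsSimple) (hv : v ∈ ρ.parity τ) (hv0 : v ≠ 0) :
    ρ.GeneratedBy v := by
  intro W hW hvW
  have hvg := inf_parity_le_inf_even_sup_inf_odd W τ ⟨hvW, hv⟩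
  have htop := (hρ.2 _ hW.inf_even_sup_inf_odd).resolve_left fun h => hv0 (by simpa [h] using hvg)
  exact top_le_iff.1 (htop ▸ sup_le inf_le_left inf_le_left)

theorem mem_wt : v ∈ ρ.wt μ ↔ ρ.L 0 v = μ • v :=
  Module.End.mem_eigenspace_iff

theorem L_zero_op (x : Generator) (m : ℤ) (v : V) :
    ρ.L 0 (ρ.op x m v) = ρ.op x m (ρ.L 0 v) + (m : ℂ) • ρ.op x m v := by
  rw [← sub_eq_iff_eq_add']
  cases x
  · rcases eq_or_ne m 0 with rfl | hm
    · simp [op]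
    · simpa [hm] using ρ.rel_LL 0 m v
  · simpa using ρ.rel_LH 0 m v
  · simpa using ρ.rel_LGp 0 m v
  · simpa using ρ.rel_LGm 0 m v

theorem op_mem_wt (x : Generator) (m : ℤ) (hv : v ∈ ρ.wt μ) : ρ.op x m v ∈ ρ.wt (μ + m) := by
  rw [mem_wt] at hv ⊢
  rw [L_zero_op, hv, map_smul, add_smul]

theorem isGraded_wt (μ : ℂ) : ρ.IsGraded (ρ.wt μ) := by
  rw [wt, Module.End.eigenspace_def]
  refine isGraded_ker 0 fun τ v hv => ?_
  have hL : ρ.L 0 v ∈ ρ.parity (τ + 0) := op_mem_parity .L 0 hv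
  rw [add_zero] at hL ⊢
  exact sub_mem hL (Submodule.smul_mem _ μ hv)

theorem exists_wt_ne_bot (hweight : ρ.IsWeight) (hρ : ¬ ρ.IsTrivialRep) : ∃ μ, ρ.wt μ ≠ ⊥ := by
  by_contra! hbot
  have htop : (⊤ : Submodule ℂ V) = ⊥ := by
    rw [← show _ = _ from hweight, iSup_eq_bot]
    exact hbot
  have : Subsingleton V := (Submodule.subsingleton_iff ℂ).1 (subsingleton_of_bot_eq_top htop.symm)
  exact hρ (isTrivialRep_iff.2 fun x m v => Subsingleton.elim _ _)

theorem IsSimple.exists_eq_add_intCast_of_wt_ne_bot (hρ : ρ.IsSimple) (hμ : ρ.wt μ ≠ ⊥) {ν : ℂ}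
    (hν : ρ.wt ν ≠ ⊥) : ∃ k : ℤ, ν = μ + k := by
  have hsub : ρ.IsSubmod (⨆ k : ℤ, ρ.wt (μ + k)) := by
    refine isSubmod_iff.2 fun x m v hv => ?_
    induction hv using Submodule.iSup_induction' with
    | mem k v hv =>
      refine Submodule.mem_iSup_of_mem (k + m) ?_
      simpa [add_assoc] using op_mem_wt x m hv
    | zero => simp
    | add v w _ _ hv hw => simpa using add_mem hv hw
  have htop : ⨆ k : ℤ, ρ.wt (μ + k) = ⊤ := by
    refine (hρ.2 _ ⟨hsub, isGraded_iSup fun k => isGraded_wt _⟩).resolve_left fun h => hμ ?_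
    simpa using iSup_eq_bot.1 h 0
  by_contra! hne
  have hdisj : Disjoint (ρ.wt ν) (⨆ k : ℤ, ρ.wt (μ + k)) :=
    (Module.End.eigenspaces_iSupIndep (ρ.L 0) ν).mono_right
      (iSup_le fun k => le_iSup₂_of_le (μ + k) (hne k).symm le_rfl)
  exact hν (disjoint_top.1 (htop ▸ hdisj))

variable (ρ) in
/-- The vectors annihilated by all operators of degree `m`. -/
def degreeKer (m : ℤ) : Submodule ℂ V := ⨅ x, LinearMap.ker (ρ.op x m)

variable (ρ) in
/-- The vectors annihilated by all operators of degree at least `N`. -/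
def kerFrom (N : ℤ) : Submodule ℂ V := ⨅ m ≥ N, ρ.degreeKer m

theorem mem_degreeKer : v ∈ ρ.degreeKer m ↔ ∀ x, ρ.op x m v = 0 := by
  simp [degreeKer]

theorem mem_kerFrom : v ∈ ρ.kerFrom N ↔ ∀ m ≥ N, v ∈ ρ.degreeKer m := by
  simp [kerFrom]

theorem kerFrom_mono : Monotone ρ.kerFrom := fun _ _ h _ hv =>
  mem_kerFrom.2 fun m hm => mem_kerFrom.1 hv m (h.trans hm)

theorem isGraded_kerFrom (N : ℤ) : ρ.IsGraded (ρ.kerFrom N) :=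
  isGraded_iInf fun m => isGraded_iInf fun _ => isGraded_iInf fun x =>
    isGraded_ker x.parity fun _ _ => op_mem_parity x m

theorem op_mem_degreeKer (y : Generator) (hv : v ∈ ρ.degreeKer m) (hv' : v ∈ ρ.degreeKer (m + n))
    (hmn : m + n ≠ 0) : ρ.op y n v ∈ ρ.degreeKer m := by
  rw [mem_degreeKer] at hv hv' ⊢
  have hcomm : n + m = m + n := add_comm n m
  obtain ⟨hL, hH, hGp, hGm⟩ := Generator.forall_iff.1 hv
  obtain ⟨hL', hH', hGp', hGm'⟩ := Generator.forall_iff.1 hv'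
  simp only [op] at hL hH hGp hGm hL' hH' hGp' hGm'
  intro x
  match x, y with
  | .L, .L => simpa [hL, hL', hmn] using ρ.rel_LL m n v
  | .L, .H => simpa [hL, hH'] using ρ.rel_LH m n v
  | .L, .Gp => simpa [hL, hGp', hcomm] using ρ.rel_LGp m n v
  | .L, .Gm => simpa [hL, hGm', hcomm] using ρ.rel_LGm m n v
  | .H, .L => simpa [hH, hH', hcomm] using ρ.rel_LH n m v
  | .H, .H => simpa [hH, hmn] using ρ.rel_HH m n v
  | .H, .Gp => simpa [hH, hGp'] using ρ.rel_HGp m n v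
  | .H, .Gm => simpa [hH, hGm'] using ρ.rel_HGm m n v
  | .Gp, .L => simpa [hGp, hGp'] using ρ.rel_LGp n m v
  | .Gp, .H => simpa [hGp, hGp', hcomm] using ρ.rel_HGp n m v
  | .Gp, .Gp => simpa [hGp] using ρ.rel_GpGp m n v
  | .Gp, .Gm => simpa [hGp, hL', hH', hmn] using ρ.rel_GpGm m n v
  | .Gm, .L => simpa [hGm, hGm'] using ρ.rel_LGm n m v
  | .Gm, .H => simpa [hGm, hGm', hcomm] using ρ.rel_HGm n m v
  | .Gm, .Gp => simpa [hGm, hL', hH', hcomm, hmn] using ρ.rel_GpGm n m v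
  | .Gm, .Gm => simpa [hGm] using ρ.rel_GmGm m n v

theorem op_mem_kerFrom {M : ℤ} (x : Generator) (hv : v ∈ ρ.kerFrom N) (hM : N ≤ M)
    (hMn : N ≤ M + n) (hpos : 0 < M + n) : ρ.op x n v ∈ ρ.kerFrom M := by
  rw [mem_kerFrom] at hv ⊢
  exact fun m hm =>
    op_mem_degreeKer x (hv m (by omega)) (hv (m + n) (by omega)) (by omega)

theorem op_mem_kerFrom_self (x : Generator) (hv : v ∈ ρ.kerFrom N) (hN : 0 < N) (hn : 0 ≤ n) :
    ρ.op x n v ∈ ρ.kerFrom N :=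
  op_mem_kerFrom x hv le_rfl (by omega) (by omega)

/-- `[L_m, X_n]` is a multiple of `X_{m+n}` for each of the four families `X`; the bounds on `m`
and `n` make all four coefficients `n - m`, `n`, `n - m/2`, `n - m/2` nonzero. -/
theorem mem_degreeKer_add_of_L_apply_mem (hv : v ∈ ρ.degreeKer n) (hLv : ρ.L m v ∈ ρ.degreeKer n)
    (hn : 0 < n) (hmn : m < n) (hne : m + n ≠ 0) : v ∈ ρ.degreeKer (m + n) := by
  rw [mem_degreeKer, Generator.forall_iff] at hv hLv ⊢
  obtain ⟨hL, hH, hGp, hGm⟩ := hv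
  obtain ⟨hL', hH', hGp', hGm'⟩ := hLv
  simp only [op] at hL hH hGp hGm hL' hH' hGp' hGm' ⊢
  have coeff_L : (n : ℂ) - m ≠ 0 := sub_ne_zero.2 (by exact_mod_cast hmn.ne')
  have coeff_H : (n : ℂ) ≠ 0 := by exact_mod_cast hn.ne'
  have coeff_G : (n : ℂ) - m / 2 ≠ 0 := by
    have h : (2 * n - m : ℂ) ≠ 0 := by exact_mod_cast (by omega : 2 * n - m ≠ 0)
    contrapose! h
    linear_combination 2 * h
  refine ⟨(smul_eq_zero_iff_right coeff_L).1 ?_, (smul_eq_zero_iff_right coeff_H).1 ?_,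
    (smul_eq_zero_iff_right coeff_G).1 ?_, (smul_eq_zero_iff_right coeff_G).1 ?_⟩
  · simpa only [hL, hL', hne, map_zero, sub_self, if_false, mul_zero, zero_mul, zero_smul,
      add_zero] using (ρ.rel_LL m n v).symm
  · simpa only [hH, hH', map_zero, sub_self] using (ρ.rel_LH m n v).symm
  · simpa only [hGp, hGp', map_zero, sub_self, add_comm n m] using (ρ.rel_LGp m n v).symm
  · simpa only [hGm, hGm', map_zero, sub_self, add_comm n m] using (ρ.rel_LGm m n v).symm

theorem degreeKer_inf_degreeKer_le (hm : 0 < m) (hmn : m < n) :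
    ρ.degreeKer m ⊓ ρ.degreeKer n ≤ ρ.degreeKer (m + n) := by
  rintro v ⟨hvm, hvn⟩
  refine mem_degreeKer_add_of_L_apply_mem hvn ?_ (hm.trans hmn) hmn (by omega)
  have hLv : ρ.L m v = 0 := mem_degreeKer.1 hvm .L
  exact hLv ▸ zero_mem _

theorem exists_mem_kerFrom {p q : ℕ} (hp : 0 < p) (hpq : p < q) (hcop : p.Coprime q)
    (hvp : v ∈ ρ.degreeKer p) (hvq : v ∈ ρ.degreeKer q) : ∃ N, v ∈ ρ.kerFrom N := by
  obtain ⟨N, hN⟩ := exists_forall_ge_mem_of_forall_add_mem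
    (D := {n : ℕ | v ∈ ρ.degreeKer n}) hp hpq hcop hvp hvq fun m hm n hn hm0 hmn => by
      simpa using degreeKer_inf_degreeKer_le (by omega) (by omega) ⟨hm, hn⟩
  refine ⟨N, mem_kerFrom.2 fun m hm => ?_⟩
  lift m to ℕ using by omega
  exact hN m (by omega)

theorem isGradedSubmod_iSup_kerFrom (ρ : RamondRep V) : ρ.IsGradedSubmod (⨆ N, ρ.kerFrom N) := by
  refine ⟨isSubmod_iff.2 fun x n v hv => ?_, isGraded_iSup isGraded_kerFrom⟩
  obtain ⟨N, hN⟩ := (Submodule.mem_iSup_of_directed _ kerFrom_mono.directed_le).1 hv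
  exact Submodule.mem_iSup_of_mem (max N (max (N - n) (1 - n)))
    (op_mem_kerFrom x hN (by omega) (by omega) (by omega))

theorem IsSimple.exists_wt_le_kerFrom (hρ : ρ.IsSimple) (hN : ρ.kerFrom N ≠ ⊥) (μ : ℂ)
    [FiniteDimensional ℂ (ρ.wt μ)] : ∃ M > 0, ρ.wt μ ≤ ρ.kerFrom M := by
  have htop : ⨆ N, ρ.kerFrom N = ⊤ :=
    (hρ.2 _ ρ.isGradedSubmod_iSup_kerFrom).resolve_left fun h => hN (iSup_eq_bot.1 h N)
  have hcompact : IsCompactElement (ρ.wt μ) :=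
    (Submodule.fg_iff_compact _).1 ((Submodule.fg_iff_finiteDimensional _).2 inferInstance)
  obtain ⟨_, ⟨M, rfl⟩, hM⟩ := hcompact (Set.range ρ.kerFrom) ⊤ (Set.range_nonempty _)
    kerFrom_mono.directed_le.directedOn_range (htop ▸ isLUB_iSup) le_top
  exact ⟨max M 1, by omega, hM.trans (kerFrom_mono (le_max_left M 1))⟩

/-- Climbing up by positive-degree operators either stops at a vector of `kerFrom 1`, or reaches a
weight `μ + k` with `N ≤ k + 1`. There `L_{-k}` maps back into `V_μ`, so that for `j > 0` the
operators of degree `j` annihilate `v`, being commutators of `L_{-k}` with those of degree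
`j + k ≥ N`. -/
theorem exists_wt_inf_kerFrom_one_ne_bot (hN : 0 < N) (hμN : ρ.wt μ ≤ ρ.kerFrom N)
    (hμ : ρ.wt μ ≠ ⊥) : ∃ ν, ρ.wt ν ⊓ ρ.kerFrom 1 ≠ ⊥ := by
  suffices climb : ∀ (d : ℕ) (k : ℤ), 0 ≤ k → N ≤ k + 1 + d →
      ρ.wt (μ + k) ⊓ ρ.kerFrom N ≠ ⊥ → ∃ ν, ρ.wt ν ⊓ ρ.kerFrom 1 ≠ ⊥ from
    climb N.toNat 0 le_rfl (by omega) (by simpa [inf_eq_left.2 hμN] using hμ)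
  intro d
  induction d with
  | zero =>
    intro k hk hNk hne
    obtain ⟨v, ⟨hvwt, hvN⟩, hv0⟩ := Submodule.exists_mem_ne_zero_of_ne_bot hne
    have hLv : ρ.L (-k) v ∈ ρ.kerFrom N := hμN (by simpa using op_mem_wt .L (-k) hvwt)
    refine ⟨μ + k, Submodule.ne_bot_iff _ |>.2 ⟨v, ⟨hvwt, mem_kerFrom.2 fun j hj => ?_⟩, hv0⟩⟩
    have hj' := mem_degreeKer_add_of_L_apply_mem (mem_kerFrom.1 hvN (j + k) (by omega))
      (mem_kerFrom.1 hLv (j + k) (by omega)) (by omega) (by omega) (by omega)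
    rwa [neg_add_cancel_comm_assoc] at hj'
  | succ d ih =>
    intro k hk hNk hne
    obtain ⟨v, ⟨hvwt, hvN⟩, hv0⟩ := Submodule.exists_mem_ne_zero_of_ne_bot hne
    by_cases hv1 : v ∈ ρ.kerFrom 1
    · exact ⟨μ + k, Submodule.ne_bot_iff _ |>.2 ⟨v, ⟨hvwt, hv1⟩, hv0⟩⟩
    · simp only [mem_kerFrom, mem_degreeKer, not_forall] at hv1
      obtain ⟨m, hm, x, hx⟩ := hv1
      refine ih (k + m) (by omega) (by omega) (Submodule.ne_bot_iff _ |>.2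
        ⟨ρ.op x m v, ⟨?_, op_mem_kerFrom_self x hvN hN (by omega)⟩, hx⟩)
      simpa [add_assoc] using op_mem_wt x m hvwt

variable (ρ) in
/-- The vectors of weight `μ` and parity `τ` satisfying the annihilation conditions of a highest
weight vector; only being an eigenvector of `H₀` is not required. -/
def singularSpace (μ : ℂ) (τ : ZMod 2) : Submodule ℂ V :=
  (ρ.wt μ ⊓ ρ.kerFrom 1) ⊓ ρ.parity τ ⊓ LinearMap.ker (ρ.Gp 0)

theorem exists_singularSpace_ne_bot (h : ρ.wt μ ⊓ ρ.kerFrom 1 ≠ ⊥) :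
    ∃ τ, ρ.singularSpace μ τ ≠ ⊥ := by
  obtain ⟨τ, hτ⟩ := ((isGraded_wt μ).inf (isGraded_kerFrom 1)).exists_inf_parity_ne_bot h
  obtain ⟨v, ⟨⟨hvwt, hv1⟩, hvτ⟩, hv0⟩ := Submodule.exists_mem_ne_zero_of_ne_bot hτ
  by_cases hG : ρ.Gp 0 v = 0
  · exact ⟨τ, Submodule.ne_bot_iff _ |>.2 ⟨v, ⟨⟨⟨hvwt, hv1⟩, hvτ⟩, hG⟩, hv0⟩⟩
  · have hwt : ρ.Gp 0 v ∈ ρ.wt μ := by simpa using op_mem_wt .Gp 0 hvwt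
    have hker : ρ.Gp 0 v ∈ ρ.kerFrom 1 := op_mem_kerFrom_self .Gp hv1 one_pos le_rfl
    have hGG : ρ.Gp 0 (ρ.Gp 0 v) = 0 := by
      simpa [← two_smul ℂ] using ρ.rel_GpGp 0 0 v
    exact ⟨_, Submodule.ne_bot_iff _ |>.2
      ⟨ρ.Gp 0 v, ⟨⟨⟨hwt, hker⟩, op_mem_parity .Gp 0 hvτ⟩, hGG⟩, hG⟩⟩

theorem H_zero_mem_singularSpace (hv : v ∈ ρ.singularSpace μ τ) :
    ρ.H 0 v ∈ ρ.singularSpace μ τ := by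
  obtain ⟨⟨⟨hvwt, hv1⟩, hvτ⟩, hG⟩ := hv
  have hG : ρ.Gp 0 v = 0 := hG
  refine ⟨⟨⟨?_, op_mem_kerFrom_self .H hv1 one_pos le_rfl⟩, ?_⟩, ?_⟩
  · simpa using op_mem_wt .H 0 hvwt
  · simpa [Generator.parity] using op_mem_parity .H 0 hvτ
  · simpa [hG] using ρ.rel_HGp 0 0 v

theorem IsSimple.isHighestWeight_of_singularSpace_ne_bot (hρ : ρ.IsSimple)
    [FiniteDimensional ℂ (ρ.wt μ)] (h : ρ.singularSpace μ τ ≠ ⊥) : ρ.IsHighestWeight := by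
  have hle : ρ.singularSpace μ τ ≤ ρ.wt μ := fun v hv => hv.1.1.1
  have := Submodule.finiteDimensional_of_le hle
  obtain ⟨v, ⟨⟨⟨hvwt, hv1⟩, hvτ⟩, hG⟩, hv0, c, hc⟩ := exists_ne_zero_mem_apply_eq_smul (ρ.H 0) _ h
    fun _ => H_zero_mem_singularSpace
  exact ⟨v, hv0, hρ.generatedBy_of_mem_parity hvτ hv0, ⟨μ, c, mem_wt.1 hvwt, hc⟩,
    fun m hm => Generator.forall_iff.1 (mem_degreeKer.1 (mem_kerFrom.1 hv1 m hm)), hG⟩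

theorem IsSimple.isHighestWeight_of_kerFrom_ne_bot (hweight : ρ.IsWeight)
    (hfin : ∀ μ, FiniteDimensional ℂ (ρ.wt μ)) (hρ : ρ.IsSimple) (hN : ρ.kerFrom N ≠ ⊥) :
    ρ.IsHighestWeight := by
  obtain ⟨μ, hμ⟩ := exists_wt_ne_bot hweight hρ.1
  obtain ⟨M, hM, hle⟩ := hρ.exists_wt_le_kerFrom hN μ
  obtain ⟨ν, hν⟩ := exists_wt_inf_kerFrom_one_ne_bot hM hle hμ
  obtain ⟨τ, hτ⟩ := exists_singularSpace_ne_bot hν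
  exact hρ.isHighestWeight_of_singularSpace_ne_bot hτ

theorem IsSimple.disjoint_degreeKer (hweight : ρ.IsWeight)
    (hfin : ∀ μ, FiniteDimensional ℂ (ρ.wt μ)) (hρ : ρ.IsSimple) (hhw : ¬ ρ.IsHighestWeight)
    {p q : ℕ} (hp : 0 < p) (hpq : p < q) (hcop : p.Coprime q) :
    Disjoint (ρ.degreeKer p) (ρ.degreeKer q) := by
  refine Submodule.disjoint_def.2 fun v hvp hvq => ?_
  obtain ⟨N, hN⟩ := exists_mem_kerFrom hp hpq hcop hvp hvq
  by_contra hv0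
  exact hhw (hρ.isHighestWeight_of_kerFrom_ne_bot hweight hfin
    ((Submodule.ne_bot_iff _).2 ⟨v, hN, hv0⟩))

variable (ρ) in
/-- The multiplicity `dim V_μ` of the weight `μ`; it is a junk `0` if `V_μ` has infinite
dimension. -/
noncomputable def mult (μ : ℂ) : ℕ := Module.finrank ℂ (ρ.wt μ)

theorem mult_le_of_disjoint_degreeKer [FiniteDimensional ℂ (ρ.wt (μ + m))]
    [FiniteDimensional ℂ (ρ.wt (μ + n))] (h : Disjoint (ρ.degreeKer m) (ρ.degreeKer n)) :
    ρ.mult μ ≤ 4 * (ρ.mult (μ + m) + ρ.mult (μ + n)) := by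
  let ops (k : ℤ) : ρ.wt μ →ₗ[ℂ] Generator → ρ.wt (μ + k) :=
    LinearMap.pi fun x => (ρ.op x k).restrict fun _ => op_mem_wt x k
  have mem_degreeKer_of_ops (k) (v : ρ.wt μ) (hv : ops k v = 0) : (v : V) ∈ ρ.degreeKer k :=
    mem_degreeKer.2 fun x => congrArg Subtype.val (congrFun hv x)
  have hinj : Function.Injective ((ops m).prod (ops n)) := by
    rw [← LinearMap.ker_eq_bot, LinearMap.ker_eq_bot']
    intro v hv
    obtain ⟨hvm, hvn⟩ := Prod.mk_eq_zero.1 hv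
    exact Subtype.ext (Submodule.disjoint_def.1 h v (mem_degreeKer_of_ops m v hvm)
      (mem_degreeKer_of_ops n v hvn))
  have hcard : Fintype.card Generator = 4 := rfl
  simpa [mult, Module.finrank_pi_fintype, hcard, mul_add] using
    LinearMap.finrank_le_finrank_of_injective hinj

theorem IsSimple.mult_sub_natCast_le (hweight : ρ.IsWeight)
    (hfin : ∀ μ, FiniteDimensional ℂ (ρ.wt μ)) (hρ : ρ.IsSimple) (hhw : ¬ ρ.IsHighestWeight)
    (μ : ℂ) {k : ℕ} (hk : 0 < k) :
    ρ.mult (μ - k) ≤ 4 * (ρ.mult μ + ρ.mult (μ + 1)) := by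
  have hdisj := hρ.disjoint_degreeKer hweight hfin hhw hk k.lt_succ_self
    (Nat.coprime_self_add_right.2 (Nat.coprime_one_right k))
  convert mult_le_of_disjoint_degreeKer (μ := μ - k) hdisj using 4 <;> push_cast <;> ring

variable (ρ) in
/-- The pullback of `ρ` along the automorphism `L_m ↦ -L_{-m}`, `H_m ↦ -H_{-m}`,
`G_m^+ ↦ G_{-m}^-`, `G_m^- ↦ -G_{-m}^+`, `C ↦ -C` of the Ramond algebra. It exchanges highest and
lowest weight modules. -/
def reverse : RamondRep V where
  L m := -ρ.L (-m)
  H m := -ρ.H (-m)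
  Gp m := ρ.Gm (-m)
  Gm m := -ρ.Gp (-m)
  c₀ := -ρ.c₀
  even := ρ.even
  odd := ρ.odd
  grading := ρ.grading
  L_even m v hv := neg_mem (ρ.L_even _ v hv)
  L_odd m v hv := neg_mem (ρ.L_odd _ v hv)
  H_even m v hv := neg_mem (ρ.H_even _ v hv)
  H_odd m v hv := neg_mem (ρ.H_odd _ v hv)
  Gp_even m v hv := ρ.Gm_even _ v hv
  Gp_odd m v hv := ρ.Gm_odd _ v hv
  Gm_even m v hv := neg_mem (ρ.Gp_even _ v hv)
  Gm_odd m v hv := neg_mem (ρ.Gp_odd _ v hv)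
  rel_LL m n v := by
    have h := ρ.rel_LL (-m) (-n) v
    simp only [← neg_add, neg_eq_zero, LinearMap.neg_apply, map_neg, neg_neg] at h ⊢
    push_cast at h
    linear_combination (norm := module) h
  rel_HH m n v := by
    have h := ρ.rel_HH (-m) (-n) v
    simp only [← neg_add, neg_eq_zero, LinearMap.neg_apply, map_neg, neg_neg] at h ⊢
    push_cast at h
    linear_combination (norm := module) h
  rel_LH m n v := by
    have h := ρ.rel_LH (-m) (-n) v
    simp only [← neg_add, LinearMap.neg_apply, map_neg, neg_neg] at h ⊢
    push_cast at h
    linear_combination (norm := module) h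
  rel_LGp m p v := by
    have h := ρ.rel_LGm (-m) (-p) v
    simp only [← neg_add, LinearMap.neg_apply, map_neg] at h ⊢
    push_cast at h
    linear_combination (norm := module) -h
  rel_LGm m p v := by
    have h := ρ.rel_LGp (-m) (-p) v
    simp only [← neg_add, LinearMap.neg_apply, map_neg, neg_neg] at h ⊢
    push_cast at h
    linear_combination (norm := module) h
  rel_HGp m p v := by
    have h := ρ.rel_HGm (-m) (-p) v
    simp only [← neg_add, LinearMap.neg_apply, map_neg] at h ⊢
    linear_combination (norm := module) -h
  rel_HGm m p v := by
    have h := ρ.rel_HGp (-m) (-p) v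
    simp only [← neg_add, LinearMap.neg_apply, map_neg, neg_neg] at h ⊢
    linear_combination (norm := module) h
  rel_GpGm p q v := by
    have h := ρ.rel_GpGm (-q) (-p) v
    simp only [← neg_add, neg_eq_zero, LinearMap.neg_apply, map_neg, add_comm q p] at h ⊢
    push_cast at h
    rcases eq_or_ne (p + q) 0 with hpq | hpq
    · obtain rfl : q = -p := by omega
      push_cast at h ⊢
      linear_combination (norm := module) -h
    · simp only [hpq, if_false] at h ⊢
      linear_combination (norm := module) -h
  rel_GpGp p q v := ρ.rel_GmGm (-p) (-q) v
  rel_GmGm p q v := by simpa using ρ.rel_GpGp (-p) (-q) v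

theorem reverse_op_mem_iff (x : Generator) :
    ρ.reverse.op x m v ∈ W ↔ ρ.op x.swap (-m) v ∈ W := by
  cases x
  exacts [neg_mem_iff, neg_mem_iff, Iff.rfl, neg_mem_iff]

theorem reverse_op_eq_zero_iff (x : Generator) :
    ρ.reverse.op x m v = 0 ↔ ρ.op x.swap (-m) v = 0 :=
  reverse_op_mem_iff (W := ⊥) x

theorem isSubmod_reverse_iff : ρ.reverse.IsSubmod W ↔ ρ.IsSubmod W := by
  simp only [isSubmod_iff, reverse_op_mem_iff]
  rw [Generator.swap_involutive.surjective.forall]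
  simp only [Generator.swap_involutive _]
  exact forall_congr' fun x =>
    (neg_surjective.forall (p := fun m => ∀ v ∈ W, ρ.op x m v ∈ W)).symm

theorem reverse_wt (μ : ℂ) : ρ.reverse.wt μ = ρ.wt (-μ) := by
  ext v
  simp [mem_wt, reverse, neg_eq_iff_eq_neg]

theorem IsWeight.reverse (h : ρ.IsWeight) : ρ.reverse.IsWeight := by
  simp only [IsWeight, reverse_wt]
  exact (neg_surjective.iSup_comp ρ.wt).trans h

theorem IsSimple.reverse (h : ρ.IsSimple) : ρ.reverse.IsSimple := by
  refine ⟨fun htriv => h.1 (isTrivialRep_iff.2 fun x m v => ?_),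
    fun W hW => h.2 W ⟨isSubmod_reverse_iff.1 hW.1, hW.2⟩⟩
  have hx := isTrivialRep_iff.1 htriv x.swap (-m) v
  rwa [reverse_op_eq_zero_iff, Generator.swap_involutive, neg_neg] at hx

theorem IsHighestWeight.of_reverse (h : ρ.reverse.IsHighestWeight) : ρ.IsLowestWeight := by
  obtain ⟨v, hv0, hgen, ⟨a, b, ha, hb⟩, hpos, hG⟩ := h
  refine ⟨v, hv0, fun W hW => hgen W (isSubmod_reverse_iff.2 hW), ⟨-a, -b, ?_, ?_⟩,
    fun m hm => ?_, by simpa [RamondRep.reverse] using hG⟩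
  · simpa [RamondRep.reverse, neg_eq_iff_eq_neg] using ha
  · simpa [RamondRep.reverse, neg_eq_iff_eq_neg] using hb
  · obtain ⟨hL, hH, hGp, hGm⟩ := hpos (-m) (by omega)
    simp only [RamondRep.reverse, neg_neg, LinearMap.neg_apply, neg_eq_zero] at hL hH hGp hGm
    exact ⟨hL, hH, hGm, hGp⟩

theorem mult_reverse (μ : ℂ) : ρ.reverse.mult μ = ρ.mult (-μ) := by
  rw [mult, reverse_wt, mult]

theorem IsSimple.mult_add_natCast_le (hweight : ρ.IsWeight)
    (hfin : ∀ μ, FiniteDimensional ℂ (ρ.wt μ)) (hρ : ρ.IsSimple) (hlw : ¬ ρ.IsLowestWeight)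
    (μ : ℂ) {k : ℕ} (hk : 0 < k) :
    ρ.mult (μ + k) ≤ 4 * (ρ.mult μ + ρ.mult (μ - 1)) := by
  have hle := hρ.reverse.mult_sub_natCast_le hweight.reverse
    (fun ν => reverse_wt (ρ := ρ) ν ▸ hfin (-ν)) (fun h => hlw h.of_reverse) (-μ) hk
  simpa only [mult_reverse, neg_sub', neg_add', neg_neg, sub_neg_eq_add] using hle

theorem IsSimple.exists_mult_le (hweight : ρ.IsWeight)
    (hfin : ∀ μ, FiniteDimensional ℂ (ρ.wt μ)) (hρ : ρ.IsSimple) (hhw : ¬ ρ.IsHighestWeight)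
    (hlw : ¬ ρ.IsLowestWeight) : ∃ p, ∀ ν, ρ.mult ν ≤ p := by
  obtain ⟨μ, hμ⟩ := exists_wt_ne_bot hweight hρ.1
  refine ⟨4 * (ρ.mult (μ - 1) + ρ.mult μ + ρ.mult (μ + 1)), fun ν => ?_⟩
  by_cases hν : ρ.wt ν = ⊥
  · rw [mult, hν, finrank_bot]
    exact Nat.zero_le _
  obtain ⟨k, rfl⟩ := hρ.exists_eq_add_intCast_of_wt_ne_bot hμ hν
  obtain ⟨n, rfl | rfl⟩ := k.eq_nat_or_neg <;> rcases n.eq_zero_or_pos with rfl | hn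
  · simp only [Nat.cast_zero, Int.cast_zero, add_zero]
    omega
  · have := hρ.mult_add_natCast_le hweight hfin hlw μ hn
    simp only [Int.cast_natCast]
    omega
  · simp only [Nat.cast_zero, neg_zero, Int.cast_zero, add_zero]
    omega
  · have := hρ.mult_sub_natCast_le hweight hfin hhw μ hn
    simp only [Int.cast_neg, Int.cast_natCast, ← sub_eq_add_neg]
    omega

end RamondRep

/-- a simple weight module with finite-dimensional weight spaces over
the `N = 2` Ramond algebra which is neither a highest weight module nor a lowest
weight module is cuspidal. -/
theorem stmt1 {V : Type} [AddCommGroup V] [Module ℂ V] (ρ : RamondRep V)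
    (hweight : ρ.IsWeight) (hfin : ∀ μ : ℂ, FiniteDimensional ℂ ↥(ρ.wt μ))
    (hsimple : ρ.IsSimple)
    (hnothw : ¬ ρ.IsHighestWeight) (hnotlw : ¬ ρ.IsLowestWeight) :
    ρ.Cuspidal := by
  obtain ⟨p, hp⟩ := hsimple.exists_mult_le hweight hfin hnothw hnotlw
  refine ⟨hweight, p, fun μ τ => ?_⟩
  have := hfin μ
  calc Module.rank ℂ ↥(ρ.wt μ ⊓ ρ.parity τ)
      ≤ Module.rank ℂ (ρ.wt μ) := Submodule.rank_mono inf_le_left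
    _ = ρ.mult μ := (Module.finrank_eq_rank ℂ _).symm
    _ ≤ p := by exact_mod_cast hp μ
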